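/- Fix γ₀ ∈ ℝ, an integer k ≥ 0, and set J′_h := S_h + γ₀h. Then, as h → 0 with ε = ε(h) → 0 and ε(h)/√h → ∞, for each choice of sign: (1) E[ (∓J′_h)^k · φ( (ε ± J′_h)/(σ√h) ) ] = O(h^{3/2}·ε^{k−Y−1}) + O(ε^{k}·e^{−ε²/(2σ²h)}); and (2) E[ ((ε ± J′_h)/(σ√h))^k · φ( (ε ± J′_h)/(σ√h) ) ] = O(h^{(3−k)/2}·ε^{k−Y−1}) + O(ε^{k}·h^{−k/2}·e^{−ε²/(2σ²h)}). -/

import Mathlib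

open MeasureTheory ProbabilityTheory Filter Asymptotics Set
open scoped Topology NNReal ENNReal Real

noncomputable section

/-- The Lévy density `s(x) = (C₊·1_{x>0} + C₋·1_{x<0})·q(x)·|x|^{−1−Y}`. -/
def levyDensity (Y Cp Cm : ℝ) (q : ℝ → ℝ) (x : ℝ) : ℝ :=
  (if 0 < x then Cp else if x < 0 then Cm else 0) * q x * |x| ^ (-1 - Y)

/-- The Lévy measure `ν(dx) = s(x) dx`. -/
def levyMeasure (Y Cp Cm : ℝ) (q : ℝ → ℝ) : Measure ℝ :=
  volume.withDensity fun x => ENNReal.ofReal (levyDensity Y Cp Cm q x)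

/-- The Lévy exponent `ψ_J(u) = ibu + ∫ (e^{iux} − 1 − iux·1_{|x|≤1}) ν(dx)`. -/
def psiJ (b Y Cp Cm : ℝ) (q : ℝ → ℝ) (u : ℝ) : ℂ :=
  Complex.I * b * u +
    ∫ x : ℝ,
      (Complex.exp (Complex.I * u * x) - 1 - (if |x| ≤ 1 then Complex.I * u * x else 0))
      ∂(levyMeasure Y Cp Cm q)

/-- The scale parameter `ς = ((C₊+C₋)Γ(−Y)|cos(πY/2)|)^{1/Y}`. -/
def varsigma (Y Cp Cm : ℝ) : ℝ :=
  ((Cp + Cm) * Real.Gamma (-Y) * |Real.cos (π * Y / 2)|) ^ (1 / Y)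

/-- The stable part of the Lévy exponent:
`ς^Y |u|^Y (1 − iβ·sgn(u)·tan(πY/2))` with `β = (C₊−C₋)/(C₊+C₋)`. -/
def stablePart (Y Cp Cm : ℝ) (u : ℝ) : ℂ :=
  (varsigma Y Cp Cm ^ Y * |u| ^ Y : ℝ) *
    (1 - Complex.I * ((Cp - Cm) / (Cp + Cm)) * Real.sign u * Real.tan (π * Y / 2))

/-- Characteristic function of `X̃_h`, the time-`h` marginal of a Brownian motion with
variance `σ²` plus an independent strictly `Y`-stable process. -/
def tildeCF (σ Y Cp Cm : ℝ) (h u : ℝ) : ℂ :=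
  Complex.exp (-(σ ^ 2 * u ^ 2 * h / 2) - h * stablePart Y Cp Cm u)


/-- Characteristic function of the strictly `Y`-stable variable `S`. -/
def stableCF (Y Cp Cm : ℝ) (u : ℝ) : ℂ := Complex.exp (-stablePart Y Cp Cm u)

/-- Standard normal density `φ`. -/
def gaussDensity (x : ℝ) : ℝ := (Real.sqrt (2 * π))⁻¹ * Real.exp (-x ^ 2 / 2)

/-!
Integrating the Fourier inversion formula for `S` by parts, the boundary term at `0` is purely
imaginary and drops out of the real part; what remains oscillates against
`u ^ (Y - 1) * exp (-c u ^ Y)`, so `S` has a density `O(|x| ^ (-1 - Y))`. By scaling, `Z = ±J′_h`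
has a density `O(h |z| ^ (-1 - Y))` for `|z|` beyond twice its drift, which is `O(h)`.

Split the expectation at `|Z| ≍ h / ε`. Below this threshold the Gaussian factor is comparable with
`exp (-ε ^ 2 / (2 σ ^ 2 h))`. Above it, half of the Gaussian exponent absorbs the ratio of the
weight `(ε + |z|) ^ k |z| ^ (-1 - Y)` to `ε ^ (k - Y - 1)`, which for small `|z|` is at most a power
of `ε ^ 2 / h`, and the other half integrates to `O(√h)`, leaving `O(h ^ (3 / 2) ε ^ (k - Y - 1))`.
-/

lemma norm_cexp_neg_mul_I_mul (x u : ℝ) : ‖Complex.exp (-(x * Complex.I * u))‖ = 1 := by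
  simp [Complex.norm_exp]

lemma hasDerivAt_cexp_neg_mul_I_mul (x u : ℝ) :
    HasDerivAt (fun u : ℝ => Complex.exp (-(x * Complex.I * u)))
      (-(x * Complex.I) * Complex.exp (-(x * Complex.I * u))) u := by
  refine ((((hasDerivAt_id u).ofReal_comp.const_mul (x * Complex.I)).neg).cexp).congr_deriv ?_
  simp only [Pi.neg_apply, id, Complex.ofReal_one]
  ring

lemma integrableOn_cexp_mul {s : Set ℝ} {g : ℝ → ℂ} (x : ℝ) (hg : IntegrableOn g s) :
    IntegrableOn (fun u : ℝ => Complex.exp (-(x * Complex.I * u)) * g u) s :=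
  hg.bdd_mul (c := 1) (by fun_prop)
    (Eventually.of_forall fun u => (norm_cexp_neg_mul_I_mul x u).le)

lemma norm_setIntegral_cexp_mul_le {s : Set ℝ} {g : ℝ → ℂ} {b : ℝ → ℝ} (x : ℝ)
    (hs : MeasurableSet s) (hb : IntegrableOn b s) (hgb : ∀ u ∈ s, ‖g u‖ ≤ b u) :
    ‖∫ u in s, Complex.exp (-(x * Complex.I * u)) * g u‖ ≤ ∫ u in s, b u :=
  norm_integral_le_of_norm_le hb <| (ae_restrict_iff' hs).2 <| Eventually.of_forall fun u hu => by
    simpa [norm_cexp_neg_mul_I_mul] using hgb u hu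

lemma integral_Ioi_cexp_mul_deriv {a x : ℝ} {g g' : ℝ → ℂ} {l : ℂ}
    (hderiv : ∀ u ∈ Ioi a, HasDerivAt g (g' u) u) (hlim : Tendsto g (𝓝[>] a) (𝓝 l))
    (hg : IntegrableOn g (Ioi a)) (hg' : IntegrableOn g' (Ioi a)) :
    ∫ u in Ioi a, Complex.exp (-(x * Complex.I * u)) * g' u =
      x * Complex.I * (∫ u in Ioi a, Complex.exp (-(x * Complex.I * u)) * g u)
        - Complex.exp (-(x * Complex.I * a)) * l := by
  have hatTop : Tendsto g atTop (𝓝 0) :=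
    tendsto_zero_of_hasDerivAt_of_integrableOn_Ioi hderiv hg' hg
  have hkernel : Tendsto (fun u : ℝ => Complex.exp (-(x * Complex.I * u))) (𝓝[>] a)
      (𝓝 (Complex.exp (-(x * Complex.I * a)))) :=
    (hasDerivAt_cexp_neg_mul_I_mul x a).continuousAt.tendsto.mono_left nhdsWithin_le_nhds
  have hprod : Tendsto (fun u : ℝ => Complex.exp (-(x * Complex.I * u)) * g u) atTop (𝓝 0) :=
    squeeze_zero_norm (a := fun u => ‖g u‖) (fun u => by simp [norm_cexp_neg_mul_I_mul])
      (by simpa using hatTop.norm)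
  have hint : IntegrableOn (fun u : ℝ => -(x * Complex.I) *
      Complex.exp (-(x * Complex.I * u)) * g u) (Ioi a) := by
    simpa only [IntegrableOn, mul_assoc] using
      (integrableOn_cexp_mul x hg).integrable.const_mul (-(x * Complex.I))
  rw [integral_Ioi_mul_deriv_eq_deriv_mul (fun u _ => hasDerivAt_cexp_neg_mul_I_mul x u) hderiv
    (integrableOn_cexp_mul x hg') hint
    (hkernel.mul hlim) hprod]
  simp only [mul_assoc, integral_const_mul, neg_mul, integral_neg]
  ring

/-- Two integrations by parts gain the factor `x⁻²` needed for integrability at infinity. -/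
lemma norm_integral_Ioi_cexp_mul_le_of_rpow_le {a p K x : ℝ} {g g' g'' : ℝ → ℂ} (ha : 0 < a)
    (hp : p < 1) (hx : x ≠ 0)
    (hderiv : ∀ u ∈ Ici a, HasDerivAt g (g' u) u) (hderiv' : ∀ u ∈ Ici a, HasDerivAt g' (g'' u) u)
    (hg : IntegrableOn g (Ioi a)) (hg' : IntegrableOn g' (Ioi a)) (hg'' : IntegrableOn g'' (Ioi a))
    (hb : ‖g a‖ ≤ K * a ^ p) (hb' : ‖g' a‖ ≤ K * a ^ (p - 1))
    (hb'' : ∀ u ∈ Ioi a, ‖g'' u‖ ≤ K * u ^ (p - 2)) :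
    ‖∫ u in Ioi a, Complex.exp (-(x * Complex.I * u)) * g u‖ ≤
      K * a ^ p / |x| + (K * a ^ (p - 1) + K * a ^ (p - 1) / (1 - p)) / |x| ^ 2 := by
  have hlim {f f' : ℝ → ℂ} (hf : ∀ u ∈ Ici a, HasDerivAt f (f' u) u) :
      Tendsto f (𝓝[>] a) (𝓝 (f a)) :=
    (hf a self_mem_Ici).continuousAt.tendsto.mono_left nhdsWithin_le_nhds
  have hparts := integral_Ioi_cexp_mul_deriv (x := x)
    (fun u hu => hderiv u (Ioi_subset_Ici_self hu)) (hlim hderiv) hg hg'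
  have hparts' := integral_Ioi_cexp_mul_deriv (x := x)
    (fun u hu => hderiv' u (Ioi_subset_Ici_self hu)) (hlim hderiv') hg' hg''
  set e := Complex.exp (-(x * Complex.I * a))
  set R := ∫ u in Ioi a, Complex.exp (-(x * Complex.I * u)) * g'' u
  have hxI : (x : ℂ) * Complex.I ≠ 0 := by simp [hx]
  have heq : ∫ u in Ioi a, Complex.exp (-(x * Complex.I * u)) * g u =
      e * g a / (x * Complex.I) + (e * g' a + R) / (x * Complex.I) ^ 2 := by
    rw [← sub_eq_iff_eq_add', eq_div_iff (pow_ne_zero 2 hxI), sub_mul, div_mul_eq_mul_div,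
      pow_two, ← mul_assoc (e * g a), mul_div_cancel_right₀ _ hxI]
    linear_combination -(x * Complex.I) * hparts - hparts'
  have hR : ‖R‖ ≤ K * a ^ (p - 1) / (1 - p) := by
    refine (norm_setIntegral_cexp_mul_le x measurableSet_Ioi
      ((integrableOn_Ioi_rpow_of_lt (by linarith) ha).const_mul K) hb'').trans_eq ?_
    rw [integral_const_mul, integral_Ioi_rpow_of_lt (by linarith) ha,
      show p - 2 + 1 = p - 1 by ring, ← neg_sub 1 p, neg_div_neg_eq, mul_div_assoc, neg_sub]
  have he (z : ℂ) : ‖e * z‖ = ‖z‖ := by rw [norm_mul, norm_cexp_neg_mul_I_mul, one_mul]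
  have hnorm : ‖(x : ℂ) * Complex.I‖ = |x| := by simp
  rw [heq]
  refine (norm_add_le _ _).trans ?_
  rw [norm_div, norm_div, norm_pow, hnorm, he]
  gcongr
  exact (norm_add_le _ _).trans (add_le_add (by rwa [he]) hR)

/-- The integral is split at `|x|⁻¹`: below, the phase is harmless; above, it oscillates. -/
lemma norm_integral_Ioi_zero_cexp_mul_le_of_rpow_le {p K x : ℝ} {g g' g'' : ℝ → ℂ}
    (hp : -1 < p) (hp' : p < 1) (hx : x ≠ 0)
    (hderiv : ∀ u ∈ Ioi 0, HasDerivAt g (g' u) u) (hderiv' : ∀ u ∈ Ioi 0, HasDerivAt g' (g'' u) u)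
    (hg : IntegrableOn g (Ioi 0)) (hg' : ∀ a, 0 < a → IntegrableOn g' (Ioi a))
    (hg'' : ∀ a, 0 < a → IntegrableOn g'' (Ioi a))
    (hb : ∀ u ∈ Ioi 0, ‖g u‖ ≤ K * u ^ p) (hb' : ∀ u ∈ Ioi 0, ‖g' u‖ ≤ K * u ^ (p - 1))
    (hb'' : ∀ u ∈ Ioi 0, ‖g'' u‖ ≤ K * u ^ (p - 2)) :
    ‖∫ u in Ioi (0 : ℝ), Complex.exp (-(x * Complex.I * u)) * g u‖ ≤
      K * (1 / (p + 1) + 2 + 1 / (1 - p)) * |x| ^ (-1 - p) := by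
  have hx' : 0 < |x| := abs_pos.2 hx
  set a : ℝ := |x|⁻¹ with ha_def
  have ha : 0 < a := inv_pos.2 hx'
  have hIoi : Ioi a ⊆ Ioi 0 := Ioi_subset_Ioi ha.le
  have hIci : Ici a ⊆ Ioi 0 := fun u hu => ha.trans_le hu
  have hhead : ‖∫ u in Ioc 0 a, Complex.exp (-(x * Complex.I * u)) * g u‖ ≤
      K * (a ^ (p + 1) / (p + 1)) := by
    have hint : IntegrableOn (fun u : ℝ => K * u ^ p) (Ioc 0 a) :=
      ((intervalIntegrable_iff_integrableOn_Ioc_of_le ha.le).1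
        (intervalIntegral.intervalIntegrable_rpow' hp)).const_mul K
    refine (norm_setIntegral_cexp_mul_le x measurableSet_Ioc hint fun u hu => hb u hu.1).trans_eq ?_
    rw [integral_const_mul, ← intervalIntegral.integral_of_le ha.le, integral_rpow (Or.inl hp),
      Real.zero_rpow (by linarith), sub_zero]
  have htail := norm_integral_Ioi_cexp_mul_le_of_rpow_le ha hp' hx
    (fun u hu => hderiv u (hIci hu)) (fun u hu => hderiv' u (hIci hu)) (hg.mono_set hIoi)
    (hg' a ha) (hg'' a ha) (hb a ha) (hb' a ha) fun u hu => hb'' u (hIoi hu)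
  have hsplit : ∫ u in Ioi (0 : ℝ), Complex.exp (-(x * Complex.I * u)) * g u =
      (∫ u in Ioc 0 a, Complex.exp (-(x * Complex.I * u)) * g u) +
        ∫ u in Ioi a, Complex.exp (-(x * Complex.I * u)) * g u := by
    have hint := integrableOn_cexp_mul x hg
    rw [← Ioc_union_Ioi_eq_Ioi ha.le]
    exact setIntegral_union (Ioc_disjoint_Ioi le_rfl) measurableSet_Ioi
      (hint.mono_set Ioc_subset_Ioi_self) (hint.mono_set hIoi)
  have hpow : |x| ^ (-1 - p) = a ^ (p + 1) := by
    rw [ha_def, Real.inv_rpow hx'.le, ← Real.rpow_neg hx'.le]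
    congr 1; ring
  rw [hsplit, hpow]
  refine (norm_add_le _ _).trans ((add_le_add hhead htail).trans_eq ?_)
  rw [show |x| = a⁻¹ by rw [ha_def, inv_inv], Real.rpow_add_one ha.ne', Real.rpow_sub_one ha.ne']
  have := (sub_pos.2 hp').ne'
  field_simp
  ring

lemma pow_mul_exp_neg_mul_le (n : ℕ) {c t : ℝ} (hc : 0 < c) (ht : 0 ≤ t) :
    t ^ n * Real.exp (-(c * t)) ≤ n.factorial / c ^ n := by
  have h := Real.pow_div_factorial_le_exp (c * t) (by positivity) n
  rw [div_le_iff₀ (by positivity), mul_pow] at h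
  rw [Real.exp_neg, ← div_eq_mul_inv, div_le_div_iff₀ (Real.exp_pos _) (by positivity)]
  linarith

section StretchedExponential

/-- The function `u ↦ u ^ q * exp (-c u ^ Y)` on `(0, ∞)`: the characteristic function of a stable
law is of this form with `q = 0`, and the family is closed under differentiation up to linear
combinations. -/
def stretchedExp (c : ℂ) (Y q u : ℝ) : ℂ :=
  (u ^ q : ℝ) * Complex.exp (-(c * (u ^ Y : ℝ)))

variable {c : ℂ} {Y q a u : ℝ}

lemma stretchedExp_zero :
    stretchedExp c Y 0 = fun u : ℝ => Complex.exp (-(c * (u ^ Y : ℝ))) := by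
  ext u
  simp [stretchedExp]

lemma norm_stretchedExp (hu : 0 ≤ u) :
    ‖stretchedExp c Y q u‖ = u ^ q * Real.exp (-(c.re * u ^ Y)) := by
  rw [stretchedExp, norm_mul, Complex.norm_of_nonneg (Real.rpow_nonneg hu q), Complex.norm_exp]
  simp

lemma norm_stretchedExp_add_mul_le (n : ℕ) (hc : 0 < c.re) (hu : 0 < u) :
    ‖stretchedExp c Y (q + n * Y) u‖ ≤ n.factorial / c.re ^ n * u ^ q := by
  rw [norm_stretchedExp hu.le, Real.rpow_add hu, mul_comm (n : ℝ) Y, Real.rpow_mul hu.le,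
    Real.rpow_natCast, mul_assoc, mul_comm _ (u ^ q)]
  exact mul_le_mul_of_nonneg_left (pow_mul_exp_neg_mul_le n hc (Real.rpow_nonneg hu.le Y))
    (Real.rpow_nonneg hu.le q)

/-- The derivative of `stretchedExp c Y q` on `(0, ∞)`. -/
def stretchedExpDeriv (c : ℂ) (Y q u : ℝ) : ℂ :=
  q * stretchedExp c Y (q - 1) u - c * Y * stretchedExp c Y (q + Y - 1) u

lemma hasDerivAt_stretchedExp (hu : 0 < u) :
    HasDerivAt (stretchedExp c Y q) (stretchedExpDeriv c Y q u) u := by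
  have hpow (r : ℝ) : HasDerivAt (fun u : ℝ => ((u ^ r : ℝ) : ℂ)) ((r * u ^ (r - 1) : ℝ) : ℂ) u :=
    (Real.hasDerivAt_rpow_const (Or.inl hu.ne')).ofReal_comp
  refine ((hpow q).mul ((hpow Y).const_mul c).neg.cexp).congr_deriv ?_
  simp only [stretchedExpDeriv, stretchedExp, Pi.neg_apply, add_sub_assoc, Real.rpow_add hu]
  push_cast
  ring

lemma exists_norm_stretchedExpDeriv_le (n : ℕ) (hc : 0 < c.re) :
    ∃ K : ℝ, ∀ u, 0 < u → ‖stretchedExpDeriv c Y (q + n * Y) u‖ ≤ K * u ^ (q - 1) := by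
  refine ⟨‖((q + n * Y : ℝ) : ℂ)‖ * (n.factorial / c.re ^ n) +
    ‖c * Y‖ * ((n + 1).factorial / c.re ^ (n + 1)), fun u hu => ?_⟩
  have hlow := norm_stretchedExp_add_mul_le (Y := Y) (q := q - 1) n hc hu
  have hhigh := norm_stretchedExp_add_mul_le (Y := Y) (q := q - 1) (n + 1) hc hu
  rw [stretchedExpDeriv, show q + n * Y - 1 = q - 1 + n * Y by ring,
    show q + n * Y + Y - 1 = q - 1 + (n + 1 : ℕ) * Y by push_cast; ring]
  refine (norm_sub_le _ _).trans ?_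
  rw [norm_mul, norm_mul (c * Y), add_mul, mul_assoc, mul_assoc]
  gcongr

lemma measurable_stretchedExp : Measurable (stretchedExp c Y q) := by
  unfold stretchedExp
  fun_prop

lemma integrableOn_Ioi_zero_stretchedExp (hY : 0 < Y) (hc : 0 < c.re) (hq : -1 < q) :
    IntegrableOn (stretchedExp c Y q) (Ioi 0) := by
  refine (integrable_norm_iff measurable_stretchedExp.aestronglyMeasurable).1 ?_
  refine (integrableOn_rpow_mul_exp_neg_mul_rpow hq hY hc).congr_fun (fun u hu => ?_)
    measurableSet_Ioi
  simp only [norm_stretchedExp (le_of_lt hu), neg_mul]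

lemma integrableOn_Ioi_stretchedExp (hY : 0 < Y) (hc : 0 < c.re) (ha : 0 < a) :
    IntegrableOn (stretchedExp c Y q) (Ioi a) := by
  rcases le_or_gt q 0 with hq | hq
  · have hdom : IntegrableOn (fun u => a ^ q * ‖stretchedExp c Y 0 u‖) (Ioi a) :=
      (((integrableOn_Ioi_zero_stretchedExp hY hc neg_one_lt_zero).mono_set
        (Ioi_subset_Ioi ha.le)).norm).const_mul _
    refine hdom.mono' measurable_stretchedExp.aestronglyMeasurable <|
      (ae_restrict_iff' measurableSet_Ioi).2 <| Eventually.of_forall fun u hu => ?_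
    have hu0 : 0 ≤ u := ha.le.trans (le_of_lt hu)
    rw [norm_stretchedExp hu0, norm_stretchedExp hu0, Real.rpow_zero, one_mul]
    exact mul_le_mul_of_nonneg_right (Real.rpow_le_rpow_of_nonpos ha (le_of_lt hu) hq)
      (Real.exp_pos _).le
  · exact (integrableOn_Ioi_zero_stretchedExp hY hc (by linarith)).mono_set (Ioi_subset_Ioi ha.le)

lemma integrableOn_Ioi_stretchedExpDeriv (hY : 0 < Y) (hc : 0 < c.re) (ha : 0 < a) :
    IntegrableOn (stretchedExpDeriv c Y q) (Ioi a) :=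
  ((integrableOn_Ioi_stretchedExp hY hc ha).integrable.const_mul _).sub
    ((integrableOn_Ioi_stretchedExp hY hc ha).integrable.const_mul _)

lemma tendsto_stretchedExp_zero (hY : 0 < Y) :
    Tendsto (stretchedExp c Y 0) (𝓝[>] 0) (𝓝 1) := by
  have hpow : Tendsto (fun u : ℝ => u ^ Y) (𝓝[>] 0) (𝓝 0) := by
    simpa [hY.ne'] using (Real.continuousAt_rpow_const 0 Y (Or.inr hY.le)).tendsto.mono_left
      nhdsWithin_le_nhds
  simpa [stretchedExp_zero, Function.comp_def] using
    ((Complex.continuous_ofReal.tendsto 0).comp hpow |>.const_mul c |>.neg).cexp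

lemma exists_norm_integral_cexp_mul_stretchedExp_le (hY : 0 < Y) (hc : 0 < c.re) (hq : -1 < q)
    (hq' : q < 1) :
    ∃ K : ℝ, ∀ x : ℝ, x ≠ 0 →
      ‖∫ u in Ioi (0 : ℝ), Complex.exp (-(x * Complex.I * u)) * stretchedExp c Y q u‖ ≤
        K * |x| ^ (-1 - q) := by
  obtain ⟨K₁, hK₁⟩ := exists_norm_stretchedExpDeriv_le (Y := Y) (q := q) 0 hc
  obtain ⟨K₂, hK₂⟩ := exists_norm_stretchedExpDeriv_le (Y := Y) (q := q - 1) 0 hc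
  obtain ⟨K₃, hK₃⟩ := exists_norm_stretchedExpDeriv_le (Y := Y) (q := q - 1) 1 hc
  simp only [Nat.cast_zero, Nat.cast_one, zero_mul, one_mul, add_zero, sub_add_eq_add_sub,
    sub_sub, one_add_one_eq_two] at hK₁ hK₂ hK₃
  have hderiv' (u : ℝ) (hu : 0 < u) : HasDerivAt (stretchedExpDeriv c Y q)
      (q * stretchedExpDeriv c Y (q - 1) u - c * Y * stretchedExpDeriv c Y (q + Y - 1) u) u :=
    ((hasDerivAt_stretchedExp hu).const_mul _).sub ((hasDerivAt_stretchedExp hu).const_mul _)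
  set K := max (max 1 K₁) (‖(q : ℂ)‖ * K₂ + ‖c * Y‖ * K₃)
  refine ⟨K * (1 / (q + 1) + 2 + 1 / (1 - q)), fun x hx =>
    norm_integral_Ioi_zero_cexp_mul_le_of_rpow_le hq hq' hx
      (fun u hu => hasDerivAt_stretchedExp hu) hderiv'
      (integrableOn_Ioi_zero_stretchedExp hY hc hq)
      (fun a ha => integrableOn_Ioi_stretchedExpDeriv hY hc ha)
      (fun a ha => ((integrableOn_Ioi_stretchedExpDeriv hY hc ha).integrable.const_mul _).sub
        ((integrableOn_Ioi_stretchedExpDeriv hY hc ha).integrable.const_mul _))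
      (fun u hu => ?_) (fun u hu => (hK₁ u hu).trans ?_) (fun u hu => ?_)⟩
  · have hle := norm_stretchedExp_add_mul_le (Y := Y) (q := q) 0 hc hu
    simp only [Nat.cast_zero, zero_mul, add_zero, Nat.factorial_zero, Nat.cast_one, pow_zero,
      div_one] at hle
    exact hle.trans (mul_le_mul_of_nonneg_right ((le_max_left _ _).trans (le_max_left _ _))
      (Real.rpow_nonneg (le_of_lt hu) q))
  · exact mul_le_mul_of_nonneg_right ((le_max_right _ _).trans (le_max_left _ _))
      (Real.rpow_nonneg (le_of_lt hu) _)
  · calc _ ≤ ‖(q : ℂ)‖ * (K₂ * u ^ (q - 2)) + ‖c * Y‖ * (K₃ * u ^ (q - 2)) := by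
          refine (norm_sub_le _ _).trans ?_
          rw [norm_mul, norm_mul (c * Y)]
          exact add_le_add (mul_le_mul_of_nonneg_left (hK₂ u hu) (norm_nonneg _))
            (mul_le_mul_of_nonneg_left (hK₃ u hu) (norm_nonneg _))
      _ = (‖(q : ℂ)‖ * K₂ + ‖c * Y‖ * K₃) * u ^ (q - 2) := by ring
      _ ≤ _ := mul_le_mul_of_nonneg_right (le_max_right _ _) (Real.rpow_nonneg (le_of_lt hu) _)

/-- One integration by parts; its boundary term is purely imaginary, so the real part decays one
order faster than the integral itself. -/
lemma exists_abs_re_integral_cexp_mul_stretchedExp_le (hY : 0 < Y) (hY2 : Y < 2) (hc : 0 < c.re) :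
    ∃ K : ℝ, ∀ x : ℝ, x ≠ 0 →
      |(∫ u in Ioi (0 : ℝ), Complex.exp (-(x * Complex.I * u)) * stretchedExp c Y 0 u).re| ≤
        K * |x| ^ (-1 - Y) := by
  obtain ⟨K, hK⟩ := exists_norm_integral_cexp_mul_stretchedExp_le (q := Y - 1) hY hc
    (by linarith) (by linarith)
  refine ⟨‖c * Y‖ * K, fun x hx => ?_⟩
  have hderiv : stretchedExpDeriv c Y 0 = fun u => -(c * Y) * stretchedExp c Y (Y - 1) u := by
    ext u
    simp [stretchedExpDeriv]
  have hparts := integral_Ioi_cexp_mul_deriv (x := x) (fun u hu => hasDerivAt_stretchedExp hu)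
    (tendsto_stretchedExp_zero hY)
    (integrableOn_Ioi_zero_stretchedExp (c := c) hY hc neg_one_lt_zero)
    (hderiv ▸ (integrableOn_Ioi_zero_stretchedExp hY hc (by linarith)).integrable.const_mul _)
  simp only [hderiv, mul_left_comm _ (-(c * Y)), integral_const_mul] at hparts
  set A := ∫ u in Ioi (0 : ℝ), Complex.exp (-(x * Complex.I * u)) * stretchedExp c Y 0 u
  set B := ∫ u in Ioi (0 : ℝ), Complex.exp (-(x * Complex.I * u)) * stretchedExp c Y (Y - 1) u
  have him : x * A.re = (-(c * Y) * B).im := by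
    rw [hparts]
    simp
  have hx' : 0 < |x| := abs_pos.2 hx
  have hbound : |x| * |A.re| ≤ ‖c * Y‖ * (K * |x| ^ (-Y)) := by
    rw [← abs_mul, him]
    refine (Complex.abs_im_le_norm _).trans ?_
    rw [norm_mul, norm_neg, show -Y = -1 - (Y - 1) by ring]
    exact mul_le_mul_of_nonneg_left (hK x hx) (norm_nonneg (c * Y))
  rw [show -1 - Y = -Y - 1 by ring, Real.rpow_sub_one hx'.ne', ← mul_div_assoc,
    le_div_iff₀ hx']
  linarith

end StretchedExponential

section Inversion

open scoped RealInnerProductSpace ComplexConjugate FourierTransform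

lemma charFun_withDensity_ofReal {E : Type*} [NormedAddCommGroup E] [InnerProductSpace ℝ E]
    [MeasurableSpace E] {ν : Measure E} {q : E → ℝ} (hq : AEMeasurable q ν) (t : E) :
    charFun (ν.withDensity fun x => ENNReal.ofReal (q x)) t =
      ∫ x, max (q x) 0 • Complex.exp (⟪x, t⟫ * Complex.I) ∂ν := by
  rw [charFun_apply, integral_withDensity_eq_integral_toReal_smul₀ hq.ennreal_ofReal
    (Eventually.of_forall fun _ => ENNReal.ofReal_lt_top)]
  simp only [ENNReal.toReal_ofReal']

lemma withDensity_ofReal_neg_mutuallySingular {α : Type*} [MeasurableSpace α] {ν : Measure α}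
    {q : α → ℝ} (hq : AEMeasurable q ν) :
    (ν.withDensity fun x => ENNReal.ofReal (q x)) ⟂ₘ
      ν.withDensity fun x => ENNReal.ofReal (-q x) := by
  have hpos := withDensity_congr_ae (hq.ae_eq_mk.fun_comp ENNReal.ofReal)
  have hneg := withDensity_congr_ae (hq.ae_eq_mk.fun_comp fun y => ENNReal.ofReal (-y))
  simp only [Function.comp_def] at hpos hneg
  rw [hpos, hneg]
  exact withDensity_ofReal_mutuallySingular hq.measurable_mk

variable {E : Type*} [NormedAddCommGroup E] [InnerProductSpace ℝ E] [CompleteSpace E]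
  [SecondCountableTopology E] [MeasurableSpace E] [BorelSpace E]

/-- Adding the negative part of the density to `μ` gives the positive part, and the two parts are
mutually singular. -/
lemma eq_withDensity_ofReal_of_charFun_eq {μ ν : Measure E} [IsFiniteMeasure μ] {q : E → ℝ}
    (hq : Integrable q ν)
    (h : ∀ t, charFun μ t = ∫ x, q x • Complex.exp (⟪x, t⟫ * Complex.I) ∂ν) :
    μ = ν.withDensity fun x => ENNReal.ofReal (q x) := by
  set qpos := ν.withDensity fun x => ENNReal.ofReal (q x)
  set qneg := ν.withDensity fun x => ENNReal.ofReal (-q x)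
  have : IsFiniteMeasure qpos := isFiniteMeasure_withDensity_ofReal hq.2
  have : IsFiniteMeasure qneg := isFiniteMeasure_withDensity_ofReal hq.neg.2
  have hexp (t : E) (ρ : Measure E) [IsFiniteMeasure ρ] :
      Integrable (fun x => Complex.exp (⟪x, t⟫ * Complex.I)) ρ :=
    (integrable_const (1 : ℝ)).mono' (by fun_prop) (by simp [Complex.norm_exp])
  have hsmul (t : E) {r : E → ℝ} (hr : Integrable r ν) :
      Integrable (fun x => r x • Complex.exp (⟪x, t⟫ * Complex.I)) ν :=
    hr.norm.mono' (hr.aestronglyMeasurable.smul (by fun_prop))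
      (by simp [Complex.norm_exp])
  have hsum : μ + qneg = qpos := by
    refine Measure.ext_of_charFun (funext fun t => ?_)
    have hadd : charFun (μ + qneg) t = charFun μ t + charFun qneg t :=
      integral_add_measure (hexp t μ) (hexp t qneg)
    have hneg : charFun qneg t = ∫ x, max (-q x) 0 • Complex.exp (⟪x, t⟫ * Complex.I) ∂ν :=
      charFun_withDensity_ofReal hq.neg.aemeasurable t
    rw [hadd, h, hneg, charFun_withDensity_ofReal hq.aemeasurable, ←
      integral_add (hsmul t hq) (hsmul t hq.neg_part)]
    refine integral_congr_ae (Eventually.of_forall fun x => ?_)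
    simp only [← add_smul]
    rcases le_total (q x) 0 with hx | hx <;> simp [hx]
  have hle : qneg ≤ qpos := hsum ▸ Measure.le_add_left le_rfl
  have hzero : qneg = 0 :=
    Measure.eq_zero_of_absolutelyContinuous_of_mutuallySingular hle.absolutelyContinuous
      (withDensity_ofReal_neg_mutuallySingular hq.aemeasurable).symm
  rw [← hsum, hzero, add_zero]

lemma integral_eq_two_mul_re_integral_Ioi {g : ℝ → ℂ} (hg : Integrable g)
    (hconj : ∀ v, g (-v) = conj (g v)) :
    ∫ v, g v = (2 * (∫ v in Ioi (0 : ℝ), g v).re : ℝ) := by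
  have hIic : ∫ v in Iic (0 : ℝ), g v = conj (∫ v in Ioi (0 : ℝ), g v) := by
    rw [← integral_conj, ← neg_zero, ← integral_comp_neg_Ioi, neg_zero]
    simp only [hconj]
  rw [← intervalIntegral.integral_Iic_add_Ioi (b := (0 : ℝ)) hg.integrableOn hg.integrableOn,
    hIic, add_comm, Complex.add_conj]

/-- The density that Lévy's inversion formula assigns to `μ`; the Fourier integral over `ℝ` is
folded onto `(0, ∞)` by conjugate symmetry of the characteristic function. -/
def charFunDensity (μ : Measure ℝ) (x : ℝ) : ℝ :=
  π⁻¹ * (∫ u in Ioi (0 : ℝ), Complex.exp (-(x * Complex.I * u)) * charFun μ u).re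

variable {μ : Measure ℝ}

lemma integral_cexp_mul_charFun (hμ : Integrable (charFun μ)) (x : ℝ) :
    ∫ u : ℝ, Complex.exp (-(x * Complex.I * u)) * charFun μ u =
      (2 * π * charFunDensity μ x : ℝ) := by
  rw [integral_eq_two_mul_re_integral_Ioi, charFunDensity]
  · congr 1
    field_simp
  · rw [← integrableOn_univ] at hμ ⊢
    exact integrableOn_cexp_mul x hμ
  · intro u
    rw [charFun_neg, map_mul, ← Complex.exp_conj]
    simp

lemma continuous_charFunDensity (hμ : Integrable (charFun μ)) : Continuous (charFunDensity μ) := by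
  have hcont : Continuous fun x : ℝ =>
      ∫ u in Ioi (0 : ℝ), Complex.exp (-(x * Complex.I * u)) * charFun μ u :=
    continuous_of_dominated (bound := fun u => ‖charFun μ u‖)
      (fun x => ((by fun_prop : Continuous fun u : ℝ =>
        Complex.exp (-(x * Complex.I * u))).aestronglyMeasurable.mul
          hμ.aestronglyMeasurable.restrict))
      (fun x => Eventually.of_forall fun u => by simp [norm_cexp_neg_mul_I_mul])
      hμ.norm.restrict (Eventually.of_forall fun u => by fun_prop)
  exact (Complex.continuous_re.comp hcont).const_mul _

lemma fourier_charFun_two_pi_mul (hμ : Integrable (charFun μ)) (w : ℝ) :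
    𝓕 (fun v => charFun μ (2 * π * v)) w = (charFunDensity μ w : ℝ) := by
  have hscale := Measure.integral_comp_mul_left
    (fun u : ℝ => Complex.exp (-(w * Complex.I * u)) * charFun μ u) (2 * π)
  rw [integral_cexp_mul_charFun hμ, abs_of_pos (by positivity), Complex.real_smul,
    ← Complex.ofReal_mul, inv_mul_cancel_left₀ (by positivity)] at hscale
  rw [← hscale, Real.fourier_real_eq_integral_exp_smul]
  refine integral_congr_ae (Eventually.of_forall fun v => ?_)
  simp only [smul_eq_mul]
  congr 2
  push_cast
  ring

lemma eq_withDensity_charFunDensity [IsFiniteMeasure μ] (hμ : Integrable (charFun μ))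
    (hdens : Integrable (charFunDensity μ)) :
    μ = volume.withDensity fun x => ENNReal.ofReal (charFunDensity μ x) := by
  have hfourier : 𝓕 (fun v => charFun μ (2 * π * v)) = fun w => (charFunDensity μ w : ℂ) :=
    funext (fourier_charFun_two_pi_mul hμ)
  have hcont : Continuous fun v : ℝ => charFun μ (2 * π * v) :=
    continuous_charFun.comp (by fun_prop)
  have hinv := hcont.fourierInv_fourier_eq
    (hμ.comp_mul_left' (show 2 * π ≠ 0 by positivity)) (hfourier ▸ hdens.ofReal)
  refine eq_withDensity_ofReal_of_charFun_eq hdens fun t => ?_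
  have ht := congrFun hinv (t / (2 * π))
  rw [hfourier, Real.fourierInv_eq', mul_div_cancel₀ _ (by positivity)] at ht
  rw [← ht]
  refine integral_congr_ae (Eventually.of_forall fun x => ?_)
  simp only [smul_eq_mul, Complex.real_smul, RCLike.inner_apply, conj_trivial]
  rw [mul_comm, show 2 * π * (t / (2 * π) * x) = t * x by field_simp]

end Inversion

section StableLaw

lemma integrable_of_abs_le_mul_abs_rpow {f : ℝ → ℝ} {K p : ℝ} (hf : Continuous f) (hp : p < -1)
    (hbound : ∀ x, x ≠ 0 → |f x| ≤ K * |x| ^ p) : Integrable f := by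
  have hIoi : IntegrableOn (fun x : ℝ => |x| ^ p) (Ioi 1) :=
    (integrableOn_Ioi_rpow_of_lt hp one_pos).congr_fun
      (fun x hx => by rw [abs_of_pos (one_pos.trans hx)]) measurableSet_Ioi
  have hIio : IntegrableOn (fun x : ℝ => |x| ^ p) (Iio (-1)) := by
    simpa only [abs_neg] using
      IntegrableOn.comp_neg_Iio (f := fun x : ℝ => |x| ^ p) (by rwa [neg_neg])
  have hbigO {l : Filter ℝ} (hl : ∀ᶠ x in l, x ≠ 0) : f =O[l] fun x => |x| ^ p :=
    IsBigO.of_bound K <| hl.mono fun x hx => by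
      simpa [Real.abs_rpow_of_nonneg (abs_nonneg x)] using hbound x hx
  exact hf.locallyIntegrable.integrable_of_isBigO_atBot_atTop (hbigO (eventually_ne_atBot 0))
    ⟨_, Iio_mem_atBot (-1), hIio⟩ (hbigO (eventually_ne_atTop 0)) ⟨_, Ioi_mem_atTop 1, hIoi⟩

variable {μ : Measure ℝ} [IsFiniteMeasure μ]

lemma integrable_charFun_of_integrableOn_Ioi (h : IntegrableOn (charFun μ) (Ioi 0)) :
    Integrable (charFun μ) :=
  continuous_charFun.locallyIntegrable.integrable_of_isBigO_atTop_of_norm_isNegInvariant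
    (Eventually.of_forall fun u => by simp [charFun_neg]) (isBigO_refl _ _)
    ⟨Ioi 0, Ioi_mem_atTop 0, h⟩

lemma exists_le_withDensity_of_charFun_eq_exp_neg_mul_rpow {c : ℂ} {Y : ℝ} (hY : 0 < Y)
    (hY2 : Y < 2) (hc : 0 < c.re)
    (hμ : ∀ u, 0 < u → charFun μ u = Complex.exp (-(c * (u ^ Y : ℝ)))) :
    ∃ K : ℝ, 0 ≤ K ∧ μ ≤ volume.withDensity fun x => ENNReal.ofReal (K * |x| ^ (-1 - Y)) := by
  obtain ⟨K, hK⟩ := exists_abs_re_integral_cexp_mul_stretchedExp_le hY hY2 hc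
  have heq : EqOn (stretchedExp c Y 0) (charFun μ) (Ioi 0) := fun u hu => by
    rw [stretchedExp_zero, hμ u hu]
  have hint : Integrable (charFun μ) := integrable_charFun_of_integrableOn_Ioi <|
    (integrableOn_Ioi_zero_stretchedExp hY hc neg_one_lt_zero).congr_fun heq measurableSet_Ioi
  have hbound (x : ℝ) (hx : x ≠ 0) : |charFunDensity μ x| ≤ π⁻¹ * K * |x| ^ (-1 - Y) := by
    have hcongr : ∫ u in Ioi (0 : ℝ), Complex.exp (-(x * Complex.I * u)) * stretchedExp c Y 0 u =
        ∫ u in Ioi (0 : ℝ), Complex.exp (-(x * Complex.I * u)) * charFun μ u :=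
      setIntegral_congr_fun measurableSet_Ioi fun u hu => congrArg (_ * ·) (heq hu)
    rw [charFunDensity, abs_mul, abs_of_pos (inv_pos.2 Real.pi_pos), mul_assoc, ← hcongr]
    exact mul_le_mul_of_nonneg_left (hK x hx) (inv_pos.2 Real.pi_pos).le
  refine ⟨π⁻¹ * K, ?_, ?_⟩
  · simpa using (abs_nonneg _).trans (hbound 1 one_ne_zero)
  · rw [eq_withDensity_charFunDensity hint (integrable_of_abs_le_mul_abs_rpow
      (continuous_charFunDensity hint) (by linarith) hbound)]
    refine withDensity_mono ?_
    filter_upwards [compl_mem_ae_iff.2 (measure_singleton (0 : ℝ))] with x hx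
    exact ENNReal.ofReal_le_ofReal ((le_abs_self _).trans (hbound x hx))

end StableLaw

section StableParameters

variable {Y Cp Cm : ℝ}

lemma gamma_neg_pos (hY1 : 1 < Y) (hY2 : Y < 2) : 0 < Real.Gamma (-Y) := by
  have h₁ : Real.Gamma (-Y + 1) = -Y * Real.Gamma (-Y) := Real.Gamma_add_one (by linarith)
  have h₂ : Real.Gamma (-Y + 1 + 1) = (-Y + 1) * Real.Gamma (-Y + 1) :=
    Real.Gamma_add_one (by linarith)
  have hpos : 0 < Real.Gamma (-Y + 1 + 1) := Real.Gamma_pos_of_pos (by linarith)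
  rw [h₂, h₁, ← mul_assoc] at hpos
  exact (pos_iff_pos_of_mul_pos hpos).1 (by nlinarith)

lemma cos_pi_mul_div_two_neg (hY1 : 1 < Y) (hY2 : Y < 3) : Real.cos (π * Y / 2) < 0 :=
  Real.cos_neg_of_pi_div_two_lt_of_lt (by nlinarith [Real.pi_pos]) (by nlinarith [Real.pi_pos])

lemma varsigma_pos (hY1 : 1 < Y) (hY2 : Y < 2) (hC : 0 < Cp + Cm) : 0 < varsigma Y Cp Cm :=
  Real.rpow_pos_of_pos (mul_pos (mul_pos hC (gamma_neg_pos hY1 hY2))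
    (abs_pos.2 (cos_pi_mul_div_two_neg hY1 (by linarith)).ne)) _

/-- The complex constant `c` with `stablePart Y Cp Cm u = c * u ^ Y` for `u > 0`. -/
def stableCoeff (Y Cp Cm : ℝ) : ℂ :=
  (varsigma Y Cp Cm ^ Y : ℝ) * (1 - Complex.I * ((Cp - Cm) / (Cp + Cm) * Real.tan (π * Y / 2) : ℝ))

lemma stableCoeff_re : (stableCoeff Y Cp Cm).re = varsigma Y Cp Cm ^ Y := by
  rw [stableCoeff, Complex.re_ofReal_mul, Complex.sub_re, Complex.I_mul_re, Complex.ofReal_im]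
  simp

lemma stablePart_of_pos {u : ℝ} (hu : 0 < u) :
    stablePart Y Cp Cm u = stableCoeff Y Cp Cm * (u ^ Y : ℝ) := by
  rw [stablePart, stableCoeff, Real.sign_of_pos hu, abs_of_pos hu]
  push_cast
  ring

lemma charFun_map_eq {Ω : Type*} [MeasurableSpace Ω] {P : Measure Ω} {S : Ω → ℝ}
    (hS : AEMeasurable S P) (u : ℝ) :
    charFun (P.map S) u = ∫ ω, Complex.exp (Complex.I * u * S ω) ∂P := by
  rw [charFun_apply_real, integral_map hS (by fun_prop)]
  exact integral_congr_ae (Eventually.of_forall fun ω => by ring_nf)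

lemma exists_map_le_withDensity_of_stableCF {Ω : Type*} [MeasurableSpace Ω] {P : Measure Ω}
    [IsFiniteMeasure P] {S : Ω → ℝ} (hS : AEMeasurable S P) (hY1 : 1 < Y) (hY2 : Y < 2)
    (hC : 0 < Cp + Cm)
    (hcf : ∀ u : ℝ, ∫ ω, Complex.exp (Complex.I * u * S ω) ∂P = stableCF Y Cp Cm u) :
    ∃ K : ℝ, 0 ≤ K ∧
      P.map S ≤ volume.withDensity fun x => ENNReal.ofReal (K * |x| ^ (-1 - Y)) :=
  exists_le_withDensity_of_charFun_eq_exp_neg_mul_rpow (by linarith) hY2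
    (stableCoeff_re ▸ Real.rpow_pos_of_pos (varsigma_pos hY1 hY2 hC) Y)
    fun u hu => by rw [charFun_map_eq hS, hcf, stableCF, stablePart_of_pos hu]

end StableParameters

section WeightedGaussian

variable {q c d v ε B z : ℝ} {k : ℕ}

lemma one_add_pow_mul_exp_neg_mul_sq_le (k : ℕ) {r : ℝ} (hd : 0 < d) (hr : -1 ≤ r) :
    (1 + r) ^ k * Real.exp (-(d * (1 - r) ^ 2)) ≤ Real.exp (k + k ^ 2 / (4 * d)) := by
  have hsq : k * r - d * (1 - r) ^ 2 ≤ k + k ^ 2 / (4 * d) := by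
    have : k + k ^ 2 / (4 * d) - (k * r - d * (1 - r) ^ 2) =
        (2 * d * (1 - r) + k) ^ 2 / (4 * d) := by
      field_simp
      ring
    linarith [show 0 ≤ (2 * d * (1 - r) + k) ^ 2 / (4 * d) by positivity]
  calc (1 + r) ^ k * Real.exp (-(d * (1 - r) ^ 2))
      ≤ Real.exp r ^ k * Real.exp (-(d * (1 - r) ^ 2)) := by
        gcongr
        · linarith
        · linarith [Real.add_one_le_exp r]
    _ = Real.exp (k * r - d * (1 - r) ^ 2) := by rw [← Real.exp_nat_mul, ← Real.exp_add]; rfl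
    _ ≤ _ := Real.exp_le_exp.2 hsq

lemma exists_one_add_pow_mul_rpow_neg_mul_exp_le (k : ℕ) {Λ A₀ : ℝ} (hq : 0 ≤ q) (hc : 0 < c)
    (hA₀ : 0 < A₀) (hΛ : 0 < Λ) :
    ∃ K : ℝ, ∀ A r, A₀ ≤ A → Λ / A < r →
      (1 + r) ^ k * r ^ (-q) * Real.exp (-(c * A * (1 - r) ^ 2)) ≤ K := by
  refine ⟨max (2 ^ k * ((⌈q⌉₊.factorial / (c / 4) ^ ⌈q⌉₊) / Λ ^ ⌈q⌉₊))
    (2 ^ q * Real.exp (k + k ^ 2 / (4 * (c * A₀)))), fun A r hA hr => ?_⟩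
  have hA0 : 0 < A := hA₀.trans_le hA
  have hr0 : 0 < r := (by positivity : 0 < Λ / A).trans hr
  rcases lt_or_ge r (1 / 2) with hr2 | hr2
  · refine le_max_of_le_left ?_
    have hrpow : r ^ (-q) ≤ (A / Λ) ^ ⌈q⌉₊ := by
      have hle : r⁻¹ ≤ A / Λ := by rw [← inv_div]; exact inv_anti₀ (by positivity) hr.le
      have hone : 1 ≤ r⁻¹ := (one_le_inv₀ hr0).2 (by linarith)
      rw [Real.rpow_neg hr0.le, ← Real.inv_rpow hr0.le, ← Real.rpow_natCast]
      exact (Real.rpow_le_rpow_of_exponent_le hone (Nat.le_ceil q)).trans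
        (Real.rpow_le_rpow (by positivity) hle (by positivity))
    have hquarter : c / 4 * A ≤ c * A * (1 - r) ^ 2 := by
      have : 1 / 4 ≤ (1 - r) ^ 2 := by nlinarith
      nlinarith [mul_le_mul_of_nonneg_left this (mul_pos hc hA0).le]
    calc (1 + r) ^ k * r ^ (-q) * Real.exp (-(c * A * (1 - r) ^ 2))
        ≤ 2 ^ k * (A / Λ) ^ ⌈q⌉₊ * Real.exp (-(c / 4 * A)) := by
          gcongr
          linarith
      _ = 2 ^ k * (A ^ ⌈q⌉₊ * Real.exp (-(c / 4 * A)) / Λ ^ ⌈q⌉₊) := by rw [div_pow]; ring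
      _ ≤ _ := by gcongr; exact pow_mul_exp_neg_mul_le _ (by positivity) hA0.le
  · refine le_max_of_le_right ?_
    have hrpow : r ^ (-q) ≤ 2 ^ q := by
      rw [Real.rpow_neg hr0.le, ← Real.inv_rpow hr0.le]
      exact Real.rpow_le_rpow (by positivity) (inv_le_of_inv_le₀ two_pos (by linarith)) hq
    calc (1 + r) ^ k * r ^ (-q) * Real.exp (-(c * A * (1 - r) ^ 2))
        ≤ (1 + r) ^ k * 2 ^ q * Real.exp (-(c * A₀ * (1 - r) ^ 2)) := by gcongr
      _ = 2 ^ q * ((1 + r) ^ k * Real.exp (-(c * A₀ * (1 - r) ^ 2))) := by ring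
      _ ≤ _ := by
        gcongr
        exact one_add_pow_mul_exp_neg_mul_sq_le k (by positivity) (by linarith)

/-- The Gaussian kernel of variance `v` at `ε + z`, weighted by `(ε + |z|) ^ k`: up to powers of
`v`, a common majorant of both integrands of the theorem at `z = ±J′_h`, `v = σ²h`. -/
def gaussWeight (k : ℕ) (v ε z : ℝ) : ℝ := (ε + |z|) ^ k * Real.exp (-((ε + z) ^ 2 / (2 * v)))

lemma measurable_gaussWeight : Measurable (gaussWeight k v ε) := by
  unfold gaussWeight
  fun_prop

lemma lintegral_exp_neg_add_sq_div (hv : 0 < v) :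
    ∫⁻ z, ENNReal.ofReal (Real.exp (-((ε + z) ^ 2 / v))) = ENNReal.ofReal √(π * v) := by
  have hint := (integrable_exp_neg_mul_sq (inv_pos.2 hv)).comp_add_left ε
  have hval := integral_add_left_eq_self (μ := volume) (fun z => Real.exp (-v⁻¹ * z ^ 2)) ε
  rw [integral_gaussian, div_inv_eq_mul] at hval
  rw [← hval, ofReal_integral_eq_lintegral_ofReal hint
    (Eventually.of_forall fun z => by positivity)]
  simp only [neg_mul, div_eq_inv_mul]

lemma exists_gaussWeight_mul_rpow_neg_le (k : ℕ) {Λ : ℝ} (hq : 0 ≤ q) (hB : 0 < B) (hΛ : 0 < Λ) :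
    ∃ K : ℝ, 0 ≤ K ∧ ∀ v ε z, 0 < v → 0 < ε → v ≤ B * ε ^ 2 → Λ * v / ε < |z| →
      gaussWeight k v ε z * |z| ^ (-q) ≤
        K * ε ^ (k - q) * Real.exp (-((ε + z) ^ 2 / (4 * v))) := by
  obtain ⟨K, hK⟩ := exists_one_add_pow_mul_rpow_neg_mul_exp_le (c := 1 / 4) k hq (by norm_num)
    (inv_pos.2 hB) hΛ
  refine ⟨max K 0, le_max_right _ _, fun v ε z hv hε hvB hz => ?_⟩
  set r := |z| / ε with hr
  have hz' : |z| = ε * r := by rw [hr]; field_simp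
  have hscaled : (1 + r) ^ k * r ^ (-q) * Real.exp (-(1 / 4 * (ε ^ 2 / v) * (1 - r) ^ 2)) ≤ K := by
    refine hK _ _ ?_ ?_
    · rw [inv_le_comm₀ hB (by positivity), inv_div, div_le_iff₀ (by positivity)]
      exact hvB
    · rw [hr, lt_div_iff₀ hε]
      exact lt_of_eq_of_lt (by field_simp) hz
  have hsq : ε ^ 2 * (1 - r) ^ 2 ≤ (ε + z) ^ 2 := by
    rw [← mul_pow, mul_sub, mul_one, ← hz', sq_le_sq]
    simpa [abs_of_pos hε] using abs_abs_sub_abs_le ε (-z)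
  have hexp : Real.exp (-((ε + z) ^ 2 / (2 * v))) ≤
      Real.exp (-(1 / 4 * (ε ^ 2 / v) * (1 - r) ^ 2)) * Real.exp (-((ε + z) ^ 2 / (4 * v))) := by
    rw [← Real.exp_add, Real.exp_le_exp]
    have : ε ^ 2 * (1 - r) ^ 2 / (4 * v) ≤ (ε + z) ^ 2 / (4 * v) := by gcongr
    calc -((ε + z) ^ 2 / (2 * v)) = -((ε + z) ^ 2 / (4 * v)) - (ε + z) ^ 2 / (4 * v) := by ring
      _ ≤ -(ε ^ 2 * (1 - r) ^ 2 / (4 * v)) - (ε + z) ^ 2 / (4 * v) := by gcongr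
      _ = _ := by ring
  have hr0 : 0 ≤ r := by positivity
  have hpow : (ε + |z|) ^ k * |z| ^ (-q) = ε ^ (k - q) * ((1 + r) ^ k * r ^ (-q)) := by
    rw [hz', Real.mul_rpow hε.le hr0, sub_eq_add_neg, Real.rpow_add hε, Real.rpow_natCast]
    rw [show ε + ε * r = ε * (1 + r) by ring, mul_pow]
    ring
  calc gaussWeight k v ε z * |z| ^ (-q)
      = (ε + |z|) ^ k * |z| ^ (-q) * Real.exp (-((ε + z) ^ 2 / (2 * v))) := by
        rw [gaussWeight]; ring
    _ ≤ ε ^ (k - q) * ((1 + r) ^ k * r ^ (-q)) *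
        (Real.exp (-(1 / 4 * (ε ^ 2 / v) * (1 - r) ^ 2)) *
          Real.exp (-((ε + z) ^ 2 / (4 * v)))) := by rw [hpow]; gcongr
    _ = ((1 + r) ^ k * r ^ (-q) * Real.exp (-(1 / 4 * (ε ^ 2 / v) * (1 - r) ^ 2))) * ε ^ (k - q) *
        Real.exp (-((ε + z) ^ 2 / (4 * v))) := by ring
    _ ≤ _ := by gcongr; exact hscaled.trans (le_max_left _ _)

lemma gaussWeight_le_of_abs_le {Λ : ℝ} (hv : 0 < v) (hε : 0 < ε) (hΛ : 0 ≤ Λ) (hvB : v ≤ B * ε ^ 2)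
    (hz : |z| ≤ Λ * v / ε) :
    gaussWeight k v ε z ≤
      (1 + Λ * B) ^ k * Real.exp Λ * (ε ^ k * Real.exp (-(ε ^ 2 / (2 * v)))) := by
  have hbase : ε + |z| ≤ (1 + Λ * B) * ε :=
    calc ε + |z| ≤ ε + Λ * (B * ε ^ 2) / ε := by grw [hz, hvB]
      _ = (1 + Λ * B) * ε := by field_simp
  have hexp : -((ε + z) ^ 2 / (2 * v)) ≤ Λ + -(ε ^ 2 / (2 * v)) := by
    have hεz : -(ε * z) ≤ Λ * v := by
      rw [le_div_iff₀ hε] at hz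
      nlinarith [neg_abs_le z]
    calc -((ε + z) ^ 2 / (2 * v)) = (-(2 * (ε * z)) - z ^ 2) / (2 * v) + -(ε ^ 2 / (2 * v)) := by
          ring
      _ ≤ (2 * (Λ * v)) / (2 * v) + -(ε ^ 2 / (2 * v)) := by
          gcongr
          nlinarith [sq_nonneg z]
      _ = _ := by field_simp
  calc gaussWeight k v ε z ≤ ((1 + Λ * B) * ε) ^ k * Real.exp (Λ + -(ε ^ 2 / (2 * v))) := by
        exact mul_le_mul (pow_le_pow_left₀ (by positivity) hbase k) (Real.exp_le_exp.2 hexp)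
          (by positivity) (pow_nonneg (le_trans (by positivity) hbase) k)
    _ = _ := by rw [mul_pow, Real.exp_add]; ring

lemma exists_setLIntegral_gaussWeight_le (k : ℕ) {Λ : ℝ} (hq : 0 ≤ q) (hB : 0 < B) (hΛ : 0 < Λ) :
    ∃ K : ℝ, 0 ≤ K ∧ ∀ v ε D : ℝ, 0 < v → 0 < ε → v ≤ B * ε ^ 2 → 0 ≤ D →
      ∫⁻ z in {z | Λ * v / ε < |z|}, ENNReal.ofReal (gaussWeight k v ε z)
          ∂volume.withDensity (fun z => ENNReal.ofReal (D * |z| ^ (-q))) ≤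
        ENNReal.ofReal (K * (D * √v * ε ^ (k - q))) := by
  obtain ⟨K, hK, hweight⟩ := exists_gaussWeight_mul_rpow_neg_le k hq hB hΛ
  refine ⟨K * √(π * 4), by positivity, fun v ε D hv hε hvB hD => ?_⟩
  have hmeas : MeasurableSet {z : ℝ | Λ * v / ε < |z|} :=
    measurableSet_lt measurable_const measurable_abs
  calc ∫⁻ z in {z | Λ * v / ε < |z|}, ENNReal.ofReal (gaussWeight k v ε z)
          ∂volume.withDensity (fun z => ENNReal.ofReal (D * |z| ^ (-q)))
      = ∫⁻ z in {z | Λ * v / ε < |z|}, ENNReal.ofReal (D * |z| ^ (-q) * gaussWeight k v ε z) := by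
        rw [setLIntegral_withDensity_eq_setLIntegral_mul _ (by fun_prop)
          measurable_gaussWeight.ennreal_ofReal hmeas]
        exact setLIntegral_congr_fun hmeas fun z _ => (ENNReal.ofReal_mul (by positivity)).symm
    _ ≤ ∫⁻ z in {z | Λ * v / ε < |z|}, ENNReal.ofReal (D * (K * ε ^ (k - q))) *
          ENNReal.ofReal (Real.exp (-((ε + z) ^ 2 / (4 * v)))) := by
        refine setLIntegral_mono' hmeas fun z hz => ?_
        rw [← ENNReal.ofReal_mul (by positivity), mul_assoc, mul_assoc, mul_comm (|z| ^ (-q))]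
        exact ENNReal.ofReal_le_ofReal
          (mul_le_mul_of_nonneg_left (hweight v ε z hv hε hvB hz) hD)
    _ ≤ ENNReal.ofReal (D * (K * ε ^ (k - q))) * ENNReal.ofReal √(π * (4 * v)) := by
        rw [lintegral_const_mul' _ _ ENNReal.ofReal_ne_top]
        gcongr
        exact (setLIntegral_le_lintegral _ _).trans_eq
          (lintegral_exp_neg_add_sq_div (by positivity))
    _ = _ := by
        rw [← ENNReal.ofReal_mul (by positivity), ← mul_assoc π, Real.sqrt_mul (by positivity)]
        ring_nf

lemma exists_lintegral_gaussWeight_le (k : ℕ) {Λ : ℝ} (hq : 0 ≤ q) (hB : 0 < B) (hΛ : 0 < Λ) :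
    ∃ K : ℝ, 0 ≤ K ∧ ∀ (v ε D : ℝ) (ν : Measure ℝ) [IsProbabilityMeasure ν], 0 < v → 0 < ε →
      v ≤ B * ε ^ 2 → 0 ≤ D →
      ν.restrict {z | Λ * v / ε < |z|} ≤
        volume.withDensity (fun z => ENNReal.ofReal (D * |z| ^ (-q))) →
      ∫⁻ z, ENNReal.ofReal (gaussWeight k v ε z) ∂ν ≤
        ENNReal.ofReal (K * (D * √v * ε ^ (k - q) + ε ^ k * Real.exp (-(ε ^ 2 / (2 * v))))) := by
  obtain ⟨K₁, hK₁, hfar⟩ := exists_setLIntegral_gaussWeight_le k hq hB hΛ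
  set K₂ := (1 + Λ * B) ^ k * Real.exp Λ
  refine ⟨max K₁ K₂, le_max_of_le_left hK₁, fun v ε D ν _ hv hε hvB hD hν => ?_⟩
  have hmeas : MeasurableSet {z : ℝ | Λ * v / ε < |z|} :=
    measurableSet_lt measurable_const measurable_abs
  have hrestrict := Measure.restrict_mono_measure hν {z : ℝ | Λ * v / ε < |z|}
  rw [Measure.restrict_restrict hmeas, inter_self] at hrestrict
  have hnear : ∫⁻ z in {z | Λ * v / ε < |z|}ᶜ, ENNReal.ofReal (gaussWeight k v ε z) ∂ν ≤
      ENNReal.ofReal (K₂ * (ε ^ k * Real.exp (-(ε ^ 2 / (2 * v))))) := by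
    refine (setLIntegral_mono' (g := fun _ => _) hmeas.compl fun z hz => ENNReal.ofReal_le_ofReal <|
      gaussWeight_le_of_abs_le hv hε hΛ.le hvB (not_lt.1 hz)).trans ?_
    rw [setLIntegral_const]
    exact mul_le_of_le_one_right' prob_le_one
  rw [← lintegral_add_compl _ hmeas]
  grw [hrestrict, hfar v ε D hv hε hvB hD, hnear]
  rw [← ENNReal.ofReal_add (by positivity) (by positivity), mul_add]
  gcongr
  · exact le_max_left _ _
  · exact le_max_right _ _

end WeightedGaussian

section AffineImage

variable {q a b : ℝ}

lemma map_mul_add_volume (ha : a ≠ 0) (b : ℝ) :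
    volume.map (fun x : ℝ => a * x + b) = ENNReal.ofReal |a⁻¹| • volume :=
  calc volume.map (fun x : ℝ => a * x + b) = (volume.map (a * ·)).map (· + b) :=
        (Measure.map_map (measurable_add_const b) (measurable_const_mul a)).symm
    _ = _ := by rw [Real.map_volume_mul_left ha, Measure.map_smul, map_add_right_eq_self]

lemma abs_rpow_neg_le_of_two_mul_abs_lt {x : ℝ} (hq : 0 ≤ q) (ha : a ≠ 0)
    (hx : 2 * |b| < |a * x + b|) :
    |x| ^ (-q) ≤ |a| * (2 ^ q * |a| ^ (q - 1) * |a * x + b| ^ (-q)) := by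
  have ha' : 0 < |a| := abs_pos.2 ha
  have hz : 0 < |a * x + b| := by linarith [abs_nonneg b]
  have hax : |a * x + b| / 2 ≤ |a| * |x| := by linarith [abs_add_le (a * x) b, abs_mul a x]
  calc |x| ^ (-q) = |a| ^ q * (|a| * |x|) ^ (-q) := by
        rw [Real.mul_rpow ha'.le (abs_nonneg x), ← mul_assoc, ← Real.rpow_add ha', add_neg_cancel,
          Real.rpow_zero, one_mul]
    _ ≤ |a| ^ q * (|a * x + b| / 2) ^ (-q) :=
        mul_le_mul_of_nonneg_left
          (Real.rpow_le_rpow_of_nonpos (by positivity) hax (neg_nonpos.2 hq)) (by positivity)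
    _ = _ := by
        rw [Real.div_rpow hz.le two_pos.le, Real.rpow_neg two_pos.le, div_inv_eq_mul,
          Real.rpow_sub_one ha'.ne']
        field_simp

lemma map_mul_add_restrict_le_withDensity {μ : Measure ℝ} {C ρ : ℝ} (hq : 0 ≤ q) (hC : 0 ≤ C)
    (ha : a ≠ 0) (hρ : 2 * |b| ≤ ρ)
    (hμ : μ ≤ volume.withDensity fun x => ENNReal.ofReal (C * |x| ^ (-q))) :
    (μ.map fun x => a * x + b).restrict {z | ρ < |z|} ≤
      volume.withDensity fun z => ENNReal.ofReal (2 ^ q * C * |a| ^ (q - 1) * |z| ^ (-q)) := by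
  have hf : Measurable fun x : ℝ => a * x + b := by fun_prop
  have hfar : MeasurableSet {z : ℝ | ρ < |z|} := measurableSet_lt measurable_const measurable_abs
  have hdens (x : ℝ) (hx : ρ < |a * x + b|) :
      C * |x| ^ (-q) ≤ |a| * (2 ^ q * C * |a| ^ (q - 1) * |a * x + b| ^ (-q)) :=
    (mul_le_mul_of_nonneg_left
      (abs_rpow_neg_le_of_two_mul_abs_lt hq ha (hρ.trans_lt hx)) hC).trans_eq (by ring)
  refine Measure.le_iff.2 fun T hT => ?_
  set U := T ∩ {z : ℝ | ρ < |z|}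
  have hU : MeasurableSet U := hT.inter hfar
  rw [Measure.restrict_apply hT, Measure.map_apply hf hU, withDensity_apply _ hT]
  calc μ ((fun x => a * x + b) ⁻¹' U)
      ≤ ∫⁻ x in (fun x => a * x + b) ⁻¹' U, ENNReal.ofReal (C * |x| ^ (-q)) :=
        (hμ _).trans_eq (withDensity_apply _ (hf hU))
    _ ≤ ∫⁻ x in (fun x => a * x + b) ⁻¹' U,
          ENNReal.ofReal (|a| * (2 ^ q * C * |a| ^ (q - 1) * |a * x + b| ^ (-q))) :=
        setLIntegral_mono' (hf hU) fun x hx => ENNReal.ofReal_le_ofReal (hdens x hx.2)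
    _ = ∫⁻ z in U, ENNReal.ofReal (|a| * (2 ^ q * C * |a| ^ (q - 1) * |z| ^ (-q)))
          ∂volume.map fun x => a * x + b :=
        (setLIntegral_map hU (f := fun z => ENNReal.ofReal
          (|a| * (2 ^ q * C * |a| ^ (q - 1) * |z| ^ (-q)))) (by fun_prop) hf).symm
    _ = ∫⁻ z in U, ENNReal.ofReal (2 ^ q * C * |a| ^ (q - 1) * |z| ^ (-q)) := by
        rw [map_mul_add_volume ha, Measure.restrict_smul, lintegral_smul_measure, smul_eq_mul,
          ← lintegral_const_mul' _ _ ENNReal.ofReal_ne_top]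
        refine lintegral_congr fun z => ?_
        rw [← ENNReal.ofReal_mul (abs_nonneg _), abs_inv, inv_mul_cancel_left₀ (abs_ne_zero.2 ha)]
    _ ≤ _ := lintegral_mono_set inter_subset_left

end AffineImage

lemma exists_add_of_isBigO_add {α : Type*} {l : Filter α} {f g₁ g₂ : α → ℝ}
    (h : f =O[l] fun x => g₁ x + g₂ x) :
    ∃ f₁ f₂ : α → ℝ, (∀ x, f x = f₁ x + f₂ x) ∧ f₁ =O[l] g₁ ∧ f₂ =O[l] g₂ := by
  classical
  obtain ⟨c, hc, hbound⟩ := h.exists_nonneg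
  have hle : ∀ᶠ x in l, ‖f x‖ ≤ c * (‖g₁ x‖ + ‖g₂ x‖) :=
    hbound.bound.mono fun x hx =>
      hx.trans (mul_le_mul_of_nonneg_left (norm_add_le (g₁ x) (g₂ x)) hc)
  refine ⟨fun x => if ‖g₂ x‖ ≤ ‖g₁ x‖ then f x else 0,
    fun x => if ‖g₂ x‖ ≤ ‖g₁ x‖ then 0 else f x, fun x => by dsimp only; split_ifs <;> simp,
    IsBigO.of_bound (2 * c) ?_, IsBigO.of_bound (2 * c) ?_⟩
  · filter_upwards [hle] with x hx
    split_ifs with hg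
    · nlinarith
    · rw [norm_zero]
      positivity
  · filter_upwards [hle] with x hx
    split_ifs with hg
    · rw [norm_zero]
      positivity
    · nlinarith

section GaussDensity

lemma gaussDensity_nonneg (x : ℝ) : 0 ≤ gaussDensity x := by
  unfold gaussDensity
  positivity

lemma gaussDensity_le_exp (x : ℝ) : gaussDensity x ≤ Real.exp (-x ^ 2 / 2) :=
  mul_le_of_le_one_left (Real.exp_pos _).le
    (inv_le_one_of_one_le₀ (Real.one_le_sqrt.2 (by linarith [Real.pi_gt_three])))

lemma gaussDensity_div_mul_sqrt_le {σ h : ℝ} (hh : 0 ≤ h) (y : ℝ) :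
    gaussDensity (y / (σ * √h)) ≤ Real.exp (-(y ^ 2 / (2 * (σ ^ 2 * h)))) := by
  refine (gaussDensity_le_exp _).trans_eq ?_
  rw [div_pow, mul_pow, Real.sq_sqrt hh]
  ring_nf

end GaussDensity

lemma rpow_neg_natCast_div_two {h : ℝ} (hh : 0 ≤ h) (k : ℕ) :
    h ^ (-(k : ℝ) / 2) = (√h ^ k)⁻¹ := by
  rw [Real.sqrt_eq_rpow, ← Real.rpow_mul_natCast hh, ← Real.rpow_neg hh]
  ring_nf

section ShiftedPowerTail

variable {Ω : Type*} [MeasurableSpace Ω] {P : Measure Ω} {S : Ω → ℝ} {Y C σ s : ℝ} {ε : ℝ → ℝ}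

lemma map_shifted_restrict_le_withDensity {h γ ρ : ℝ} (hY : 0 < Y) (hC : 0 ≤ C)
    (hS : AEMeasurable S P)
    (hdens : P.map S ≤ volume.withDensity fun x => ENNReal.ofReal (C * |x| ^ (-1 - Y)))
    (hs : s ≠ 0) (hh : 0 < h) (hρ : 2 * |s * γ * h| ≤ ρ) :
    (P.map fun ω => s * h ^ (1 / Y) * S ω + s * γ * h).restrict {z | ρ < |z|} ≤
      volume.withDensity fun z =>
        ENNReal.ofReal (2 ^ (1 + Y) * C * |s| ^ Y * h * |z| ^ (-(1 + Y))) := by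
  have ha : s * h ^ (1 / Y) ≠ 0 := mul_ne_zero hs (Real.rpow_pos_of_pos hh _).ne'
  have hscale : |s * h ^ (1 / Y)| ^ (1 + Y - 1) = |s| ^ Y * h := by
    rw [add_sub_cancel_left, abs_mul, abs_of_pos (Real.rpow_pos_of_pos hh _),
      Real.mul_rpow (abs_nonneg s) (by positivity), ← Real.rpow_mul hh.le,
      one_div_mul_cancel hY.ne', Real.rpow_one]
  simp only [← neg_add'] at hdens
  have := map_mul_add_restrict_le_withDensity (by linarith) hC ha hρ hdens
  rw [hscale, AEMeasurable.map_map_of_aemeasurable (by fun_prop) hS] at this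
  simpa only [Function.comp_def, mul_assoc] using this

lemma exists_lintegral_gaussWeight_shifted_le [IsProbabilityMeasure P] (hY : 0 < Y) (hC : 0 ≤ C)
    (hσ : 0 < σ) (hS : AEMeasurable S P)
    (hdens : P.map S ≤ volume.withDensity fun x => ENNReal.ofReal (C * |x| ^ (-1 - Y)))
    (γ : ℝ) (k : ℕ) (hs : s ≠ 0) {E M : ℝ} (hE : 0 < E) (hM : 0 < M) :
    ∃ K : ℝ, 0 ≤ K ∧ ∀ h ε : ℝ, 0 < h → 0 < ε → ε ≤ E → √h ≤ M * ε →
      ∫⁻ ω, ENNReal.ofReal (gaussWeight k (σ ^ 2 * h) ε (s * (h ^ (1 / Y) * S ω + γ * h))) ∂P ≤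
        ENNReal.ofReal (K * (h ^ ((3 : ℝ) / 2) * ε ^ ((k : ℝ) - Y - 1) +
          ε ^ k * Real.exp (-(ε ^ 2) / (2 * σ ^ 2 * h)))) := by
  set Λ := 2 * |s * γ| * E / σ ^ 2 + 1 with hΛ
  obtain ⟨K, hK, hmain⟩ := exists_lintegral_gaussWeight_le (q := 1 + Y) (B := (σ * M) ^ 2)
    (Λ := Λ) k (by linarith) (by positivity) (by positivity)
  set D := 2 ^ (1 + Y) * C * |s| ^ Y
  refine ⟨K * max (D * σ) 1, by positivity, fun h ε hh hε hεE hεM => ?_⟩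
  have hshift : 2 * |s * γ * h| ≤ Λ * (σ ^ 2 * h) / ε := by
    rw [abs_mul _ h, abs_of_pos hh, le_div_iff₀ hε]
    calc 2 * (|s * γ| * h) * ε ≤ 2 * (|s * γ| * h) * E := by gcongr
      _ ≤ 2 * (|s * γ| * h) * E + σ ^ 2 * h := le_add_of_nonneg_right (by positivity)
      _ = _ := by rw [hΛ]; field_simp
  have hvar : σ ^ 2 * h ≤ (σ * M) ^ 2 * ε ^ 2 :=
    calc σ ^ 2 * h = σ ^ 2 * √h ^ 2 := by rw [Real.sq_sqrt hh.le]
      _ ≤ σ ^ 2 * (M * ε) ^ 2 := by gcongr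
      _ = _ := by ring
  have haff : AEMeasurable (fun ω => s * h ^ (1 / Y) * S ω + s * γ * h) P := by fun_prop
  have := Measure.isProbabilityMeasure_map haff
  calc ∫⁻ ω, ENNReal.ofReal (gaussWeight k (σ ^ 2 * h) ε (s * (h ^ (1 / Y) * S ω + γ * h))) ∂P
      = ∫⁻ z, ENNReal.ofReal (gaussWeight k (σ ^ 2 * h) ε z)
          ∂P.map fun ω => s * h ^ (1 / Y) * S ω + s * γ * h := by
        rw [lintegral_map' measurable_gaussWeight.ennreal_ofReal.aemeasurable haff]
        simp only [mul_add, mul_assoc]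
    _ ≤ ENNReal.ofReal (K * (D * h * √(σ ^ 2 * h) * ε ^ (k - (1 + Y)) +
          ε ^ k * Real.exp (-(ε ^ 2 / (2 * (σ ^ 2 * h)))))) :=
        hmain _ _ _ _ (by positivity) hε hvar (by positivity) <|
          map_shifted_restrict_le_withDensity hY hC hS hdens hs hh hshift
    _ ≤ _ := ENNReal.ofReal_le_ofReal ?_
  have hfar : D * h * √(σ ^ 2 * h) * ε ^ (k - (1 + Y)) =
      D * σ * (h ^ ((3 : ℝ) / 2) * ε ^ ((k : ℝ) - Y - 1)) := by
    rw [Real.sqrt_mul (by positivity), Real.sqrt_sq hσ.le, Real.sqrt_eq_rpow, sub_right_comm,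
      sub_sub, show (3 : ℝ) / 2 = 1 + 1 / 2 by norm_num, Real.rpow_one_add' hh.le (by norm_num)]
    ring
  rw [hfar, mul_assoc K, ← mul_assoc 2, ← neg_div, mul_add (max _ _)]
  refine mul_le_mul_of_nonneg_left (add_le_add ?_ ?_) hK
  · gcongr
    exact le_max_left _ _
  · exact le_mul_of_one_le_left (by positivity) (le_max_right _ _)

lemma isBigO_integral_mul_gaussDensity [IsProbabilityMeasure P] (hY : 0 < Y) (hC : 0 ≤ C)
    (hσ : 0 < σ) (hS : AEMeasurable S P)
    (hdens : P.map S ≤ volume.withDensity fun x => ENNReal.ofReal (C * |x| ^ (-1 - Y)))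
    (γ : ℝ) (k : ℕ) (hε_pos : ∀ᶠ h in 𝓝[>] (0 : ℝ), 0 < ε h)
    (hε_one : ε =O[𝓝[>] (0 : ℝ)] fun _ => (1 : ℝ)) (hε_sqrt : Real.sqrt =O[𝓝[>] (0 : ℝ)] ε)
    (hs : s ≠ 0) {F : ℝ → ℝ → ℝ} {D : ℝ → ℝ}
    (hF : ∀ᶠ h in 𝓝[>] (0 : ℝ), ∀ z, |F h z| ≤ D h * (ε h + |z|) ^ k) :
    (fun h => ∫ ω, F h (s * (h ^ (1 / Y) * S ω + γ * h)) *
        gaussDensity ((ε h + s * (h ^ (1 / Y) * S ω + γ * h)) / (σ * √h)) ∂P)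
      =O[𝓝[>] (0 : ℝ)] fun h => D h * (h ^ ((3 : ℝ) / 2) * ε h ^ ((k : ℝ) - Y - 1) +
        ε h ^ k * Real.exp (-(ε h ^ 2) / (2 * σ ^ 2 * h))) := by
  obtain ⟨E, hE, hεE⟩ := hε_one.exists_pos
  obtain ⟨M, hM, hεM⟩ := hε_sqrt.exists_pos
  obtain ⟨K, hK, hweight⟩ :=
    exists_lintegral_gaussWeight_shifted_le hY hC hσ hS hdens γ k hs hE hM
  refine IsBigO.of_bound K ?_
  filter_upwards [self_mem_nhdsWithin, hε_pos, hF, hεE.bound, hεM.bound]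
    with h (hh : 0 < h) hε hFh hεE hεM
  rw [Real.norm_of_nonneg hε.le, norm_one, mul_one] at hεE
  rw [Real.norm_of_nonneg (Real.sqrt_nonneg h), Real.norm_of_nonneg hε.le] at hεM
  have hD : 0 ≤ D h :=
    nonneg_of_mul_nonneg_left ((abs_nonneg _).trans (hFh 0)) (pow_pos (by positivity) k)
  have hpointwise (z : ℝ) : ‖F h z * gaussDensity ((ε h + z) / (σ * √h))‖ ≤
      D h * gaussWeight k (σ ^ 2 * h) (ε h) z := by
    rw [norm_mul, Real.norm_eq_abs, Real.norm_of_nonneg (gaussDensity_nonneg _), gaussWeight,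
      ← mul_assoc]
    exact mul_le_mul (hFh z) (gaussDensity_div_mul_sqrt_le hh.le _) (gaussDensity_nonneg _)
      (by positivity)
  rw [Real.norm_of_nonneg (r := D h * _) (by positivity), mul_left_comm]
  refine (norm_integral_le_lintegral_norm _).trans
    (ENNReal.toReal_le_of_le_ofReal (by positivity) ?_)
  calc _ ≤ ∫⁻ ω, ENNReal.ofReal (D h) * ENNReal.ofReal
          (gaussWeight k (σ ^ 2 * h) (ε h) (s * (h ^ (1 / Y) * S ω + γ * h))) ∂P :=
        lintegral_mono fun ω => (ENNReal.ofReal_le_ofReal (hpointwise _)).trans_eq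
          (ENNReal.ofReal_mul hD)
    _ ≤ _ := by
        rw [lintegral_const_mul' _ _ ENNReal.ofReal_ne_top, ENNReal.ofReal_mul hD]
        gcongr
        exact hweight h (ε h) hh hε hεE hεM

theorem moment_weighted_gaussian_density_estimates_general [IsProbabilityMeasure P] (hY : 0 < Y)
    (hC : 0 ≤ C) (hσ : 0 < σ) (hS : AEMeasurable S P)
    (hdens : P.map S ≤ volume.withDensity fun x => ENNReal.ofReal (C * |x| ^ (-1 - Y)))
    (γ : ℝ) (k : ℕ) (hε_pos : ∀ᶠ h in 𝓝[>] (0 : ℝ), 0 < ε h)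
    (hε_one : ε =O[𝓝[>] (0 : ℝ)] fun _ => (1 : ℝ)) (hε_sqrt : Real.sqrt =O[𝓝[>] (0 : ℝ)] ε)
    (hs : s ≠ 0) :
    (∃ R₁ R₂ : ℝ → ℝ,
      (∀ h, ∫ ω, (-s * (h ^ (1 / Y) * S ω + γ * h)) ^ k *
          gaussDensity ((ε h + s * (h ^ (1 / Y) * S ω + γ * h)) / (σ * √h)) ∂P = R₁ h + R₂ h) ∧
      R₁ =O[𝓝[>] (0 : ℝ)] (fun h => h ^ ((3 : ℝ) / 2) * ε h ^ ((k : ℝ) - Y - 1)) ∧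
      R₂ =O[𝓝[>] (0 : ℝ)] (fun h => ε h ^ k * Real.exp (-(ε h ^ 2) / (2 * σ ^ 2 * h)))) ∧
    (∃ R₁ R₂ : ℝ → ℝ,
      (∀ h, ∫ ω, ((ε h + s * (h ^ (1 / Y) * S ω + γ * h)) / (σ * √h)) ^ k *
          gaussDensity ((ε h + s * (h ^ (1 / Y) * S ω + γ * h)) / (σ * √h)) ∂P = R₁ h + R₂ h) ∧
      R₁ =O[𝓝[>] (0 : ℝ)] (fun h => h ^ ((3 - (k : ℝ)) / 2) * ε h ^ ((k : ℝ) - Y - 1)) ∧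
      R₂ =O[𝓝[>] (0 : ℝ)] (fun h => ε h ^ k * h ^ (-(k : ℝ) / 2) *
        Real.exp (-(ε h ^ 2) / (2 * σ ^ 2 * h)))) := by
  have hmain {F : ℝ → ℝ → ℝ} {D : ℝ → ℝ} := isBigO_integral_mul_gaussDensity (F := F) (D := D)
    hY hC hσ hS hdens γ k hε_pos hε_one hε_sqrt hs
  constructor
  · refine exists_add_of_isBigO_add ?_
    simpa only [neg_mul, one_mul] using hmain (F := fun _ z => (-z) ^ k) (D := fun _ => 1) <|
      hε_pos.mono fun h hε z => by
        rw [abs_pow, abs_neg, one_mul]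
        gcongr
        exact le_add_of_nonneg_left hε.le
  · have hF : ∀ᶠ h in 𝓝[>] (0 : ℝ), ∀ z, |((ε h + z) / (σ * √h)) ^ k| ≤
        ((σ * √h) ^ k)⁻¹ * (ε h + |z|) ^ k := by
      filter_upwards [hε_pos] with h hε z
      rw [abs_pow, abs_div, abs_of_nonneg (by positivity : 0 ≤ σ * √h), div_pow, div_eq_inv_mul]
      gcongr
      exact (abs_add_le _ _).trans_eq (by rw [abs_of_pos hε])
    refine exists_add_of_isBigO_add <| (hmain hF).trans <| IsBigO.of_bound (σ ^ k)⁻¹ ?_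
    filter_upwards [self_mem_nhdsWithin] with h (hh : 0 < h)
    rw [← Real.norm_of_nonneg (by positivity : 0 ≤ (σ ^ k)⁻¹), ← norm_mul]
    refine le_of_eq (congrArg _ ?_)
    rw [show (3 - (k : ℝ)) / 2 = 3 / 2 + -k / 2 by ring, Real.rpow_add hh,
      rpow_neg_natCast_div_two hh.le]
    ring

end ShiftedPowerTail

/-- Lemma C.2: moment-weighted Gaussian-density expectations of the shifted
stable variable `J′_h = S_h + γ₀h`. -/
theorem moment_weighted_gaussian_density_estimates
    {Ω : Type*} [MeasurableSpace Ω] (P : Measure Ω) [IsProbabilityMeasure P]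
    (Y Cp Cm σ : ℝ)
    (hY1 : 1 < Y) (hY2 : Y < 2) (hCp : 0 < Cp) (hCm : 0 < Cm) (hσ : 0 < σ)
    (S : Ω → ℝ) (hSmeas : Measurable S)
    (hScf : ∀ u : ℝ, ∫ ω, Complex.exp (Complex.I * u * S ω) ∂P = stableCF Y Cp Cm u)
    (γ₀ : ℝ) (k : ℕ)
    -- the threshold `ε = ε(h)`
    (ε : ℝ → ℝ) (hεpos : ∀ h : ℝ, 0 < h → 0 < ε h)
    (hε0 : Tendsto ε (𝓝[>] (0 : ℝ)) (𝓝 0))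
    (hεsqrt : Tendsto (fun h => ε h / Real.sqrt h) (𝓝[>] (0 : ℝ)) atTop) :
    ∀ s : ℝ, s = 1 ∨ s = -1 →
      -- part (1): `E[(∓J′_h)^k φ((ε ± J′_h)/(σ√h))] = O(h^{3/2} ε^{k−Y−1}) + O(ε^k e^{−ε²/(2σ²h)})`
      (∃ R₁ R₂ : ℝ → ℝ,
        (∀ h : ℝ, 0 < h →
          (∫ ω, (-s * (h ^ (1 / Y) * S ω + γ₀ * h)) ^ k *
              gaussDensity ((ε h + s * (h ^ (1 / Y) * S ω + γ₀ * h)) / (σ * Real.sqrt h)) ∂P)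
            = R₁ h + R₂ h) ∧
        R₁ =O[𝓝[>] (0 : ℝ)] (fun h => h ^ ((3 : ℝ) / 2) * ε h ^ ((k : ℝ) - Y - 1)) ∧
        R₂ =O[𝓝[>] (0 : ℝ)]
          (fun h => ε h ^ k * Real.exp (-(ε h ^ 2) / (2 * σ ^ 2 * h)))) ∧
      -- part (2): `E[((ε ± J′_h)/(σ√h))^k φ((ε ± J′_h)/(σ√h))]
      --            = O(h^{(3−k)/2} ε^{k−Y−1}) + O(ε^k h^{−k/2} e^{−ε²/(2σ²h)})`
      (∃ R₁ R₂ : ℝ → ℝ,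
        (∀ h : ℝ, 0 < h →
          (∫ ω, ((ε h + s * (h ^ (1 / Y) * S ω + γ₀ * h)) / (σ * Real.sqrt h)) ^ k *
              gaussDensity ((ε h + s * (h ^ (1 / Y) * S ω + γ₀ * h)) / (σ * Real.sqrt h)) ∂P)
            = R₁ h + R₂ h) ∧
        R₁ =O[𝓝[>] (0 : ℝ)] (fun h => h ^ ((3 - (k : ℝ)) / 2) * ε h ^ ((k : ℝ) - Y - 1)) ∧
        R₂ =O[𝓝[>] (0 : ℝ)]
          (fun h => ε h ^ k * h ^ (-(k : ℝ) / 2) *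
            Real.exp (-(ε h ^ 2) / (2 * σ ^ 2 * h)))) := by
  intro s hs
  obtain ⟨K, hK, hdens⟩ :=
    exists_map_le_withDensity_of_stableCF hSmeas.aemeasurable hY1 hY2 (add_pos hCp hCm) hScf
  have hs₀ : s ≠ 0 := by rcases hs with rfl | rfl <;> norm_num
  have hε_pos : ∀ᶠ h in 𝓝[>] (0 : ℝ), 0 < ε h := eventually_mem_nhdsWithin.mono hεpos
  have hε_sqrt : Real.sqrt =O[𝓝[>] (0 : ℝ)] ε :=
    (isLittleO_of_tendsto' (hε_pos.mono fun h hε h₀ => absurd h₀ hε.ne')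
      (hεsqrt.inv_tendsto_atTop.congr fun h => inv_div _ _)).isBigO
  obtain ⟨⟨R₁, R₂, hR, hR₁, hR₂⟩, ⟨T₁, T₂, hT, hT₁, hT₂⟩⟩ :=
    moment_weighted_gaussian_density_estimates_general (by linarith) hK hσ hSmeas.aemeasurable
      hdens γ₀ k hε_pos (hε0.isBigO_one ℝ) hε_sqrt hs₀
  exact ⟨⟨R₁, R₂, fun h _ => hR h, hR₁, hR₂⟩, ⟨T₁, T₂, fun h _ => hT h, hT₁, hT₂⟩⟩

end
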